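/- Let q be a prime power and let H be the Hermitian curve over F_{q²} with affine equation x^{q+1} = y^q + y. For any m, c ∈ F_{q²}, the number of points x ∈ F_{q²} satisfying x^{q+1} = (mx + c)^q + (mx + c) (i.e., the number of affine F_{q²}-points in the intersection of H with the line y = mx + c) is either 1 or q + 1. -/

import Mathlib

/-!
Put `σ y = y ^ q`, an involutive automorphism of `F_{q²}`. On the line `y = m x + c` the equation
of the curve reads `x * σ x = σ (m x + c) + (m x + c)`. Completing the square with `z = x - σ m`
turns it into `z * σ z = k`, where `k = c ^ q + c + m ^ (q + 1)` is fixed by `σ`. If `k = 0` then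
`z = 0` is the only solution. Otherwise `k ^ (q - 1) = 1`, and since `F_{q²}ˣ` is cyclic of order
`(q - 1) * (q + 1)`, the equation `z ^ (q + 1) = k` has exactly `q + 1` solutions.
-/

section CyclicGroup

variable {G : Type*} [CommGroup G] [IsCyclic G] [Finite G] {d n : ℕ}

theorem range_powMonoidHom_eq_ker (h : d * n = Nat.card G) :
    (powMonoidHom n : G →* G).range = (powMonoidHom d).ker := by
  have range_le_ker : (powMonoidHom n : G →* G).range ≤ (powMonoidHom d).ker := by
    rintro _ ⟨x, rfl⟩
    simp only [MonoidHom.mem_ker, powMonoidHom_apply, ← pow_mul, mul_comm n d, h, pow_card_eq_one']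
  have n_pos : 0 < n := Nat.pos_of_mul_pos_left (h ▸ Nat.card_pos)
  refine Subgroup.eq_of_le_of_card_ge range_le_ker ?_
  rw [IsCyclic.card_powMonoidHom_ker, IsCyclic.card_powMonoidHom_range, ← h,
    Nat.gcd_mul_right_left, Nat.gcd_mul_left_left, Nat.mul_div_cancel _ n_pos]

theorem card_pow_eq_of_pow_eq_one (h : d * n = Nat.card G) {a : G} (ha : a ^ d = 1) :
    Nat.card {x : G // x ^ n = a} = n := by
  obtain ⟨b, rfl⟩ : a ∈ (powMonoidHom n : G →* G).range := range_powMonoidHom_eq_ker h ▸ ha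
  calc Nat.card {x : G // x ^ n = b ^ n}
      = Nat.card (powMonoidHom n : G →* G).ker :=
        Nat.card_congr ((powMonoidHom n).fiberEquivKer b)
    _ = n := by rw [IsCyclic.card_powMonoidHom_ker, ← h, Nat.gcd_mul_left_left]

end CyclicGroup

theorem card_units_pow_eq {M : Type*} [Monoid M] {n : ℕ} (hn : n ≠ 0) (a : Mˣ) :
    Nat.card {u : Mˣ // u ^ n = a} = Nat.card {x : M // x ^ n = a} := by
  refine Nat.card_eq_of_bijective
    (fun u ↦ ⟨u.1, by rw [← Units.val_pow_eq_pow_val, u.2]⟩) ⟨fun u v huv ↦ ?_, fun ⟨x, hx⟩ ↦ ?_⟩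
  · exact Subtype.ext (Units.ext (congrArg Subtype.val huv))
  · obtain ⟨u, rfl⟩ : IsUnit x := (isUnit_pow_iff hn).1 (hx ▸ a.isUnit)
    exact ⟨⟨u, Units.ext hx⟩, rfl⟩

section Involution

variable {R : Type*} [CommRing R] {σ : R →+* R}

theorem map_trace_add_norm (hσ : Function.Involutive σ) (m c : R) :
    σ (σ c + c + m * σ m) = σ c + c + m * σ m := by
  simp only [map_add, map_mul, hσ c, hσ m]
  ring

theorem mul_map_eq_line_iff (hσ : Function.Involutive σ) (m c x : R) :
    x * σ x = σ (m * x + c) + (m * x + c) ↔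
      (x - σ m) * σ (x - σ m) = σ c + c + m * σ m := by
  simp only [map_sub, map_add, map_mul, hσ m]
  constructor <;> intro h <;> linear_combination h

theorem card_mul_map_eq_line (hσ : Function.Involutive σ) (m c : R) :
    Nat.card {x : R // x * σ x = σ (m * x + c) + (m * x + c)} =
      Nat.card {z : R // z * σ z = σ c + c + m * σ m} :=
  Nat.card_congr ((Equiv.subRight (σ m)).subtypeEquiv (mul_map_eq_line_iff hσ m c))

end Involution

section FiniteField

variable {K : Type*} [Field K] [Finite K] {q : ℕ}

theorem exists_involutive_ringHom_eq_pow (hK : Nat.card K = q ^ 2) :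
    ∃ σ : K →+* K, Function.Involutive σ ∧ ∀ x, σ x = x ^ q := by
  have := Fintype.ofFinite K
  rw [Nat.card_eq_fintype_card] at hK
  obtain ⟨p, _, n, hp, hn⟩ := FiniteField.card' K
  have := Fact.mk hp
  obtain ⟨e, -, rfl⟩ : ∃ e ≤ (n : ℕ), q = p ^ e :=
    (Nat.dvd_prime_pow hp).1 (hn ▸ hK ▸ dvd_pow_self q two_ne_zero)
  refine ⟨iterateFrobenius K p e, fun x ↦ ?_, iterateFrobenius_def p e⟩
  rw [iterateFrobenius_def, iterateFrobenius_def, ← pow_mul, ← sq, ← hK, FiniteField.pow_card]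

theorem card_pow_succ_eq_of_pow_eq_self (hK : Nat.card K = q ^ 2) {k : K} (hk : k ≠ 0)
    (hkq : k ^ q = k) : Nat.card {z : K // z ^ (q + 1) = k} = q + 1 := by
  have card_units : (q - 1) * (q + 1) = Nat.card Kˣ := by
    rw [Nat.card_units, hK, mul_comm, ← Nat.sq_sub_sq, one_pow]
  have q_ne_zero : q ≠ 0 := by
    rintro rfl
    exact Nat.card_pos.ne' hK
  have pow_pred_eq_one : Units.mk0 k hk ^ (q - 1) = 1 := by
    refine Units.ext (mul_right_cancel₀ hk ?_)
    simp only [Units.val_pow_eq_pow_val, Units.val_mk0, Units.val_one, one_mul,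
      pow_sub_one_mul q_ne_zero, hkq]
  exact (card_units_pow_eq q.succ_ne_zero (Units.mk0 k hk)).symm.trans
    (card_pow_eq_of_pow_eq_one card_units pow_pred_eq_one)

theorem card_hermitian_inter_line_eq_card_norm (hK : Nat.card K = q ^ 2) (m c : K) :
    Nat.card {x : K // x ^ (q + 1) = (m * x + c) ^ q + (m * x + c)} =
      Nat.card {z : K // z ^ (q + 1) = c ^ q + c + m ^ (q + 1)} := by
  obtain ⟨σ, hσ, σ_eq_pow⟩ := exists_involutive_ringHom_eq_pow hK
  simpa only [σ_eq_pow, ← pow_succ'] using card_mul_map_eq_line hσ m c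

theorem card_hermitian_inter_line_of_eq_zero (hK : Nat.card K = q ^ 2) {m c : K}
    (h : c ^ q + c + m ^ (q + 1) = 0) :
    Nat.card {x : K // x ^ (q + 1) = (m * x + c) ^ q + (m * x + c)} = 1 := by
  rw [card_hermitian_inter_line_eq_card_norm hK, h]
  simp only [pow_eq_zero_iff q.succ_ne_zero, Nat.card_unique]

theorem card_hermitian_inter_line_of_ne_zero (hK : Nat.card K = q ^ 2) {m c : K}
    (h : c ^ q + c + m ^ (q + 1) ≠ 0) :
    Nat.card {x : K // x ^ (q + 1) = (m * x + c) ^ q + (m * x + c)} = q + 1 := by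
  obtain ⟨σ, hσ, σ_eq_pow⟩ := exists_involutive_ringHom_eq_pow hK
  have pow_eq_self : (c ^ q + c + m ^ (q + 1)) ^ q = c ^ q + c + m ^ (q + 1) := by
    simpa only [σ_eq_pow, ← pow_succ'] using map_trace_add_norm hσ m c
  rw [card_hermitian_inter_line_eq_card_norm hK, card_pow_succ_eq_of_pow_eq_self hK h pow_eq_self]

end FiniteField

/-- A line `y = mx + c` of the affine plane meets the Hermitian curve
`x^{q+1} = y^q + y` over `F_{q²}` in either `1` or `q + 1` points. -/
theorem stmt_13 (p e : ℕ) (hp : p.Prime) (he : 0 < e) (q : ℕ) (hq : q = p ^ e)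
    (F : Type) [Field F] [Fintype F] (hF : Fintype.card F = q ^ 2)
    (m c : F) :
    Nat.card {x : F // x ^ (q + 1) = (m * x + c) ^ q + (m * x + c)} = 1 ∨
      Nat.card {x : F // x ^ (q + 1) = (m * x + c) ^ q + (m * x + c)} = q + 1 := by
  have hK : Nat.card F = q ^ 2 := Nat.card_eq_fintype_card.trans hF
  exact (eq_or_ne (c ^ q + c + m ^ (q + 1)) 0).imp
    (card_hermitian_inter_line_of_eq_zero hK) (card_hermitian_inter_line_of_ne_zero hK)
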